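/- For reals μ̂, σ̂, ε_μ, ε_σ, m_σ, M_μ with 0 < m_σ ≤ σ̂, 0 < μ̂ ≤ M_μ, ε_μ ≥ 0, ε_σ ≥ 0, the following inequality holds: (μ̂ − 2ε_μ)/(√5 σ̂ + 2ε_σ) ≥ μ̂/(√5 σ̂) − 2 M_μ ε_σ / (√5 m_σ (√5 m_σ + 2 ε_σ)) − 2 ε_μ / (√5 m_σ + 2 ε_σ). -/

import Mathlib

lemma div_sub_div_self_add {K : Type*} [Field K] (a : K) {s d : K} (hs : s ≠ 0)
    (hsd : s + d ≠ 0) : a / s - a / (s + d) = d * a / (s * (s + d)) := by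
  rw [div_sub_div _ _ hs hsd]
  ring

theorem cdr_algebraic_bound_general {K : Type*} [Field K] [LinearOrder K] [IsStrictOrderedRing K]
    {μ ε s δ m M : K} (hm : 0 < m) (hms : m ≤ s) (hM : 0 ≤ M) (hμM : μ ≤ M)
    (hε : 0 ≤ ε) (hδ : 0 ≤ δ) :
    μ / s - δ * M / (m * (m + δ)) - ε / (m + δ) ≤ (μ - ε) / (s + δ) := by
  have hs : 0 < s := hm.trans_le hms
  have hsδ : 0 < s + δ := add_pos_of_pos_of_nonneg hs hδ
  calc μ / s - δ * M / (m * (m + δ)) - ε / (m + δ)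
      ≤ μ / s - δ * μ / (s * (s + δ)) - ε / (s + δ) := by gcongr
    _ = (μ - ε) / (s + δ) := by
      rw [← div_sub_div_self_add μ hs.ne' hsδ.ne', sub_sub_cancel, sub_div]

/-- Algebraic inequality used in the proof of Lemma 1:
`(μ̂ - 2ε_μ)/(√5 σ̂ + 2ε_σ) ≥ μ̂/(√5 σ̂) - 2 M_μ ε_σ/(√5 m_σ(√5 m_σ + 2ε_σ)) - 2ε_μ/(√5 m_σ + 2ε_σ)`. -/
theorem cdr_algebraic_bound
    (μhat σhat εμ εσ mσ Mμ : ℝ)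
    (hmσ : 0 < mσ) (hσlow : mσ ≤ σhat)
    (hμpos : 0 < μhat) (hMμ : μhat ≤ Mμ)
    (hεμ : 0 ≤ εμ) (hεσ : 0 ≤ εσ) :
    (μhat - 2 * εμ) / (Real.sqrt 5 * σhat + 2 * εσ) ≥
      μhat / (Real.sqrt 5 * σhat) -
        2 * Mμ * εσ / (Real.sqrt 5 * mσ * (Real.sqrt 5 * mσ + 2 * εσ)) -
        2 * εμ / (Real.sqrt 5 * mσ + 2 * εσ) := by
  rw [mul_right_comm 2 Mμ]
  exact cdr_algebraic_bound_general (by positivity) (by gcongr) (hμpos.le.trans hMμ) hMμ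
    (by positivity) (by positivity)
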